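/- arXiv:2207.13672 — 2 statements merged into one kernel-verified Lean document; each statement's English description precedes it below -/
import Mathlib

section
/- Let X and Y be metric spaces in which any two distinct points are at distance at least 1, and let φ : X → Y be a bijection which is a quasi-isometry, i.e., there exist λ ≥ 1 and A ≥ 0 such that (1/λ)·d_X(x,x') − A ≤ d_Y(φ(x),φ(x')) ≤ λ·d_X(x,x') + A for all x, x' ∈ X. Then a function g : Y → ℂ is geometrically slowly-oscillating if and only if g ∘ φ : X → ℂ is geometrically slowly-oscillating. -/
open Filter Metric

/-- `g` is an integral `(q,Q)`-quasi-geodesic on the index set `s ⊆ ℕ`: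
`|x − y|/q − Q ≤ d(g x, g y) ≤ q·|x − y| + Q` for all `x, y ∈ s`. -/
def IsQGOn {X : Type*} [MetricSpace X] (q Q : ℝ) (g : ℕ → X) (s : Set ℕ) : Prop :=
  ∀ x ∈ s, ∀ y ∈ s,
    |(x : ℝ) - (y : ℝ)| / q - Q ≤ dist (g x) (g y) ∧
    dist (g x) (g y) ≤ q * |(x : ℝ) - (y : ℝ)| + Q

/-- An integral `(q,Q)`-quasi-geodesic ray: domain all positive integers. -/
def IsQGRay {X : Type*} [MetricSpace X] (q Q : ℝ) (g : ℕ → X) : Prop :=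
  IsQGOn q Q g {i | 1 ≤ i}

/-- The `m`-cone `C_X(x₀,q,Q,g,m)`: all `x ∈ X` reachable as `h i`, `i ≥ m`, by an
integral `(q,Q)`-quasi-geodesic `h` starting at `x₀` and agreeing with `g` for indices `≤ m`. -/
def Cone {X : Type*} [MetricSpace X] (x₀ : X) (q Q : ℝ) (g : ℕ → X) (m : ℕ) : Set X :=
  {x | ∃ (h : ℕ → X) (n i : ℕ), IsQGOn q Q h (Set.Icc 1 n) ∧ h 1 = x₀ ∧
      (∀ j, 1 ≤ j → j ≤ m → h j = g j) ∧ m ≤ i ∧ i ≤ n ∧ h i = x}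

/-- `f` is slowly-oscillating: whenever `d(x₀,xₙ) → ∞` and `d(xₙ,yₙ) < M` for all `n ≥ 1`,
then `d(f xₙ, f yₙ) → 0`. -/
def SlowlyOscillating {X E : Type*} [MetricSpace X] [PseudoMetricSpace E] (f : X → E) : Prop :=
  ∀ (x₀ : X) (x y : ℕ → X),
    Tendsto (fun n => dist x₀ (x n)) atTop atTop →
    (∃ M > (0 : ℝ), ∀ n, 1 ≤ n → dist (x n) (y n) < M) →
    Tendsto (fun n => dist (f (x n)) (f (y n))) atTop (nhds 0)

/-- `f` is geometrically slowly-oscillating: bounded, continuous, slowly-oscillating, and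
for every `ε > 0`, `k ≥ 1`, `x₀` and integral `(k,k)`-quasi-geodesic ray `g` at `x₀`
there is `m ≥ 1` with `diam (f '' C_X(x₀,k,k,g,m)) < ε`. -/
def GeomSO {X E : Type*} [MetricSpace X] [PseudoMetricSpace E] (f : X → E) : Prop :=
  Bornology.IsBounded (Set.range f) ∧ Continuous f ∧ SlowlyOscillating f ∧
    ∀ ε > (0 : ℝ), ∀ k : ℝ, 1 ≤ k → ∀ (x₀ : X) (g : ℕ → X),
      IsQGRay k k g → g 1 = x₀ →
      ∃ m : ℕ, 1 ≤ m ∧ Metric.diam (f '' Cone x₀ k k g m) < ε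

/-- Every bounded subset of `X` can be covered by finitely many sets of diameter less than `M`. -/
def CoverM (X : Type*) [MetricSpace X] (M : ℝ) : Prop :=
  ∀ B : Set X, Bornology.IsBounded B →
    ∃ S : Finset (Set X), (∀ s ∈ S, Metric.diam s < M) ∧ B ⊆ ⋃ s ∈ S, (s : Set X)

/-- `X` is integrally `(q,Q)`-quasi-geodesic: every two points are joined by a finite
integral `(q,Q)`-quasi-geodesic. -/
def IntegrallyQGWith (X : Type*) [MetricSpace X] (q Q : ℝ) : Prop :=
  ∀ x y : X, ∃ (g : ℕ → X) (n : ℕ), 1 ≤ n ∧ IsQGOn q Q g (Set.Icc 1 n) ∧ g 1 = x ∧ g n = y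

/-- The Gromov product `⟨x,y⟩_a = (d(x,a) + d(y,a) − d(x,y))/2`. -/
noncomputable def gromovProd {X : Type*} [MetricSpace X] (a x y : X) : ℝ :=
  (dist x a + dist y a - dist x y) / 2

/-- `X` is a geodesic space: any two points are joined by a geodesic segment. -/
def IsGeodesicSpace (X : Type*) [MetricSpace X] : Prop :=
  ∀ x y : X, ∃ γ : ℝ → X, γ 0 = x ∧ γ (dist x y) = y ∧
    ∀ s ∈ Set.Icc (0 : ℝ) (dist x y), ∀ t ∈ Set.Icc (0 : ℝ) (dist x y),
      dist (γ s) (γ t) = |s - t|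

/-!
A quasi-isometric embedding carries quasi-geodesics to quasi-geodesics with worse constants, hence
cones into cones, so precomposition with it preserves every clause of the definition of a
geometrically slowly-oscillating function except continuity. A section of a surjective
quasi-isometric embedding is again a quasi-isometric embedding, which gives the converse.
-/

/-- `φ` is a `(lam, A)`-quasi-isometric embedding: it distorts distances by at most a factor `lam`
and an additive error `A`. The range of `φ` need not be coarsely dense. -/
structure IsQuasiIsometricEmbedding {X Y : Type*} [PseudoMetricSpace X] [PseudoMetricSpace Y]
    (lam A : ℝ) (φ : X → Y) : Prop where
  one_le : 1 ≤ lam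
  nonneg : 0 ≤ A
  le_dist : ∀ x x', dist x x' / lam - A ≤ dist (φ x) (φ x')
  dist_le : ∀ x x', dist (φ x) (φ x') ≤ lam * dist x x' + A

theorem IsQuasiIsometricEmbedding.of_rightInverse {X Y : Type*} [PseudoMetricSpace X]
    [PseudoMetricSpace Y] {lam A : ℝ} {φ : X → Y} {ψ : Y → X}
    (hφ : IsQuasiIsometricEmbedding lam A φ) (hψ : Function.RightInverse ψ φ) :
    IsQuasiIsometricEmbedding lam (lam * A) ψ := by
  have hlam := hφ.one_le
  have hA := hφ.nonneg
  have hlam_pos : 0 < lam := by linarith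
  refine ⟨hlam, by positivity, fun y y' => ?_, fun y y' => ?_⟩
  · have hdist : dist y y' ≤ lam * dist (ψ y) (ψ y') + A := by
      simpa only [hψ y, hψ y'] using hφ.dist_le (ψ y) (ψ y')
    have hA_le : A ≤ lam * (lam * A) :=
      (le_mul_of_one_le_left hA hlam).trans (le_mul_of_one_le_left (by positivity) hlam)
    rw [sub_le_iff_le_add, div_le_iff₀ hlam_pos]
    linarith
  · have hdist : dist (ψ y) (ψ y') / lam - A ≤ dist y y' := by
      simpa only [hψ y, hψ y'] using hφ.le_dist (ψ y) (ψ y')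
    rw [sub_le_iff_le_add, div_le_iff₀ hlam_pos] at hdist
    linarith

section Cone

variable {X : Type*} [MetricSpace X] {q q' Q Q' : ℝ}

theorem IsQGOn.mono {h : ℕ → X} {s : Set ℕ} (hh : IsQGOn q Q h s) (hq : 0 < q) (hqq' : q ≤ q')
    (hQQ' : Q ≤ Q') : IsQGOn q' Q' h s := by
  intro i hi j hj
  obtain ⟨hlower, hupper⟩ := hh i hi j hj
  exact ⟨le_trans (by gcongr) hlower, hupper.trans (by gcongr)⟩

theorem cone_subset_cone (x₀ : X) (g : ℕ → X) (m : ℕ) (hq : 0 < q) (hqq' : q ≤ q')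
    (hQQ' : Q ≤ Q') : Cone x₀ q Q g m ⊆ Cone x₀ q' Q' g m := by
  rintro x ⟨h, n, i, hh, hrest⟩
  exact ⟨h, n, i, hh.mono hq hqq' hQQ', hrest⟩

end Cone

section Comp

variable {X Y E : Type*} [MetricSpace X] [MetricSpace Y] [PseudoMetricSpace E]
  {lam A q Q : ℝ} {φ : X → Y}

theorem IsQGOn.comp_left {h : ℕ → X} {s : Set ℕ} (hh : IsQGOn q Q h s) (hQ : 0 ≤ Q)
    (hφ : IsQuasiIsometricEmbedding lam A φ) : IsQGOn (lam * q) (lam * Q + A) (φ ∘ h) s := by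
  intro i hi j hj
  obtain ⟨hlower, hupper⟩ := hh i hi j hj
  have hlam := hφ.one_le
  have : 0 ≤ lam := by linarith
  constructor
  · have hQ_div_le : Q / lam ≤ lam * Q :=
      (div_le_self hQ hlam).trans (le_mul_of_one_le_left hQ hlam)
    calc |(i : ℝ) - j| / (lam * q) - (lam * Q + A)
        ≤ |(i : ℝ) - j| / (lam * q) - (Q / lam + A) := by gcongr
      _ = (|(i : ℝ) - j| / q - Q) / lam - A := by rw [mul_comm, ← div_div]; ring
      _ ≤ dist (h i) (h j) / lam - A := by gcongr
      _ ≤ dist (φ (h i)) (φ (h j)) := hφ.le_dist _ _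
  · calc dist (φ (h i)) (φ (h j))
        ≤ lam * dist (h i) (h j) + A := hφ.dist_le _ _
      _ ≤ lam * (q * |(i : ℝ) - j| + Q) + A := by gcongr
      _ = lam * q * |(i : ℝ) - j| + (lam * Q + A) := by ring

theorem IsQuasiIsometricEmbedding.mapsTo_cone (hφ : IsQuasiIsometricEmbedding lam A φ)
    (hQ : 0 ≤ Q) (x₀ : X) (g : ℕ → X) (m : ℕ) :
    Set.MapsTo φ (Cone x₀ q Q g m) (Cone (φ x₀) (lam * q) (lam * Q + A) (φ ∘ g) m) := by
  rintro _ ⟨h, n, i, hh, hstart, hagree, hmi, hin, rfl⟩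
  exact ⟨φ ∘ h, n, i, hh.comp_left hQ hφ, congrArg φ hstart,
    fun j hj hjm => congrArg φ (hagree j hj hjm), hmi, hin, rfl⟩

theorem SlowlyOscillating.comp {f : Y → E} (hf : SlowlyOscillating f)
    (hφ : IsQuasiIsometricEmbedding lam A φ) : SlowlyOscillating (f ∘ φ) := by
  have hA := hφ.nonneg
  have hlam_pos : 0 < lam := zero_lt_one.trans_le hφ.one_le
  rintro x₀ x y hx ⟨M, hM, hxy⟩
  refine hf (φ x₀) (φ ∘ x) (φ ∘ y) ?_ ⟨lam * M + A, by positivity, fun n hn => ?_⟩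
  · exact tendsto_atTop_mono (fun n => hφ.le_dist x₀ (x n))
      (tendsto_atTop_add_const_right _ (-A) (hx.atTop_div_const hlam_pos))
  · calc dist (φ (x n)) (φ (y n))
        ≤ lam * dist (x n) (y n) + A := hφ.dist_le _ _
      _ < lam * M + A := by gcongr; exact hxy n hn

theorem GeomSO.comp {f : Y → E} (hf : GeomSO f) (hφ : IsQuasiIsometricEmbedding lam A φ)
    (hcont : Continuous (f ∘ φ)) : GeomSO (f ∘ φ) := by
  obtain ⟨hbdd, -, hslow, hcone⟩ := hf
  refine ⟨hbdd.subset (Set.range_comp_subset_range φ f), hcont, hslow.comp hφ, ?_⟩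
  intro ε hε k hk x₀ r hr hr_start
  have hA := hφ.nonneg
  have hk_pos : 0 < k := by linarith
  have hk_le : k ≤ lam * k := le_mul_of_one_le_left hk_pos.le hφ.one_le
  have hlam_le : lam * k ≤ lam * k + A := by linarith
  have hlam_pos : 0 < lam * k := by linarith
  have hray : IsQGRay (lam * k + A) (lam * k + A) (φ ∘ r) :=
    (hr.comp_left hk_pos.le hφ).mono hlam_pos hlam_le le_rfl
  obtain ⟨m, hm, hdiam⟩ :=
    hcone ε hε (lam * k + A) (by linarith) (φ x₀) (φ ∘ r) hray (congrArg φ hr_start)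
  have hmaps : Set.MapsTo φ (Cone x₀ k k r m)
      (Cone (φ x₀) (lam * k + A) (lam * k + A) (φ ∘ r) m) :=
    (hφ.mapsTo_cone hk_pos.le x₀ r m).mono_right (cone_subset_cone _ _ _ hlam_pos hlam_le le_rfl)
  refine ⟨m, hm, lt_of_le_of_lt (Metric.diam_mono ?_ ?_) hdiam⟩
  · rw [Set.image_comp]
    exact Set.image_mono hmaps.image_subset
  · exact hbdd.subset (Set.image_subset_range _ _)

theorem stmt_13_general (hφ : IsQuasiIsometricEmbedding lam A φ)
    (hquot : Topology.IsQuotientMap φ) (g : Y → E) : GeomSO g ↔ GeomSO (g ∘ φ) := by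
  refine ⟨fun hg => hg.comp hφ (hg.2.1.comp hquot.continuous), fun hgφ => ?_⟩
  obtain ⟨ψ, hψ⟩ := hquot.surjective.hasRightInverse
  have hsection : (g ∘ φ) ∘ ψ = g := by rw [Function.comp_assoc, hψ.comp_eq_id, Function.comp_id]
  -- `ψ` may be discontinuous, so continuity of `g` comes from the quotient topology instead.
  have hcont : Continuous g := hquot.continuous_iff.mpr hgφ.2.1
  simpa only [hsection] using hgφ.comp (hφ.of_rightInverse hψ) (hsection.symm ▸ hcont)

end Comp

theorem isQuotientMap_of_surjective_of_discreteTopology {X Y : Type*} [TopologicalSpace X]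
    [TopologicalSpace Y] [DiscreteTopology X] [DiscreteTopology Y] {φ : X → Y}
    (hφ : Function.Surjective φ) : Topology.IsQuotientMap φ :=
  IsOpenMap.isQuotientMap (fun _ _ => isOpen_discrete _) continuous_of_discreteTopology hφ

/-- Proposition 4.12 (key step): for a quasi-isometric bijection between 1-discrete spaces,
g is geometrically slowly-oscillating iff g ∘ φ is. -/
theorem stmt_13 {X Y : Type*} [MetricSpace X] [MetricSpace Y]
    (hX : ∀ x x' : X, x ≠ x' → 1 ≤ dist x x')
    (hY : ∀ y y' : Y, y ≠ y' → 1 ≤ dist y y')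
    (φ : X → Y) (hbij : Function.Bijective φ)
    (lam A : ℝ) (hlam : 1 ≤ lam) (hA : 0 ≤ A)
    (hqi : ∀ x x' : X, dist x x' / lam - A ≤ dist (φ x) (φ x') ∧
      dist (φ x) (φ x') ≤ lam * dist x x' + A)
    (g : Y → ℂ) :
    GeomSO g ↔ GeomSO (g ∘ φ) := by
  have : DiscreteTopology X := .of_forall_le_dist one_pos hX
  have : DiscreteTopology Y := .of_forall_le_dist one_pos hY
  exact stmt_13_general ⟨hlam, hA, fun x x' => (hqi x x').1, fun x x' => (hqi x x').2⟩
    (isQuotientMap_of_surjective_of_discreteTopology hbij.surjective) g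
end

section
/- If X and Y are proper unbounded integrally quasi-geodesic metric spaces, then the cartesian product X × Y with the ℓ₁-metric has trivial quasi-geodesic boundary: for any two integral quasi-geodesic rays g and h in X × Y and every geometrically slowly-oscillating function f : X × Y → ℂ, one has lim_{i→∞} f(g(i)) = lim_{i→∞} f(h(i)). -/
open Filter Metric

/-!
A ray `g` is followed up to an index `J` so large that `g J` lies well outside a ball of radius `R`
around a base point, with `J` linear in `R`. In an `ℓ₁`-product the complement of a ball is
connected in an efficient way: moving first in one factor and then in the other joins `g J` to any
point `z` both of whose coordinates are far from the base point, along a quasi-geodesic that avoids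
the ball. If `z` is at distance comparable to `R`, everything has length comparable to `R`, and
cutting the corner between `g` and the detour along a shortest crossing gives a quasi-geodesic from
`g 1` to `z` which still follows `g` inside the ball and whose constants do not depend on `R`. So
the `m`-cones of any two rays share points for all `m`, and the two limits coincide.

Cutting corners needs honest geodesics, which are found in the graph joining points at distance at
most `q + Q`.
-/

section QuasiPath

variable {V : Type*} {G : SimpleGraph V} {K C : ℕ} {a b u v w : ℕ → V} {J L T m n : ℕ}

/-- A quasi-geodesic of the connected graph `G` with vertices `w 0, …, w T`: consecutive vertices
are equal or adjacent, and indices differ by at most `K` times the graph distance plus `C`.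
Unreachable vertices have junk distance `0`, so the notion is not meaningful for a disconnected
`G`. -/
structure IsQuasiPath (G : SimpleGraph V) (K C : ℕ) (w : ℕ → V) (T : ℕ) : Prop where
  dist_succ_le : ∀ i < T, G.dist (w i) (w (i + 1)) ≤ 1
  le_add_mul_dist : ∀ i j, i ≤ j → j ≤ T → j ≤ i + K * G.dist (w i) (w j) + C

/-- The sequence that follows `u` up to the index `n` and continues with `v`, started at `v 0`.
It is meant for sequences with `v 0 = u n`. -/
def concatAt (u : ℕ → V) (n : ℕ) (v : ℕ → V) (i : ℕ) : V :=
  if i < n then u i else v (i - n)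

lemma concatAt_add (u : ℕ → V) (n : ℕ) (v : ℕ → V) (j : ℕ) : concatAt u n v (n + j) = v j := by
  simp [concatAt]

lemma concatAt_of_le (huv : v 0 = u n) {i : ℕ} (hi : i ≤ n) : concatAt u n v i = u i := by
  obtain hi | rfl := hi.lt_or_eq
  · simp [concatAt, hi]
  · simp [concatAt, huv]

namespace IsQuasiPath

lemma take (h : IsQuasiPath G K C w T) (hn : n ≤ T) : IsQuasiPath G K C w n :=
  ⟨fun i hi => h.dist_succ_le i (hi.trans_le hn),
    fun i j hij hj => h.le_add_mul_dist i j hij (hj.trans hn)⟩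

lemma drop (h : IsQuasiPath G K C w T) (hn : n ≤ T) :
    IsQuasiPath G K C (fun i => w (n + i)) (T - n) where
  dist_succ_le i hi := h.dist_succ_le (n + i) (by omega)
  le_add_mul_dist i j hij hj := by
    have := h.le_add_mul_dist (n + i) (n + j) (by omega) (by omega)
    omega

lemma concat (hu : IsQuasiPath G K C u n) (hv : IsQuasiPath G K C v m) (huv : v 0 = u n)
    (hcross : ∀ i ≤ n, ∀ j ≤ m, n + j ≤ i + K * G.dist (u i) (v j) + C) :
    IsQuasiPath G K C (concatAt u n v) (n + m) where
  dist_succ_le i hi := by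
    obtain hin | hin := lt_or_ge i n
    · rw [concatAt_of_le huv hin.le, concatAt_of_le huv hin]
      exact hu.dist_succ_le i hin
    · obtain ⟨e, rfl⟩ := Nat.exists_eq_add_of_le hin
      rw [add_assoc, concatAt_add, concatAt_add]
      exact hv.dist_succ_le e (by omega)
  le_add_mul_dist i j hij hj := by
    obtain hjn | hjn := le_total j n
    · rw [concatAt_of_le huv hjn, concatAt_of_le huv (hij.trans hjn)]
      exact hu.le_add_mul_dist i j hij hjn
    obtain ⟨e, rfl⟩ := Nat.exists_eq_add_of_le hjn
    obtain hin | hin := le_total i n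
    · rw [concatAt_of_le huv hin, concatAt_add]
      exact hcross i hin e (by omega)
    · obtain ⟨d, rfl⟩ := Nat.exists_eq_add_of_le hin
      rw [concatAt_add, concatAt_add]
      have := hv.le_add_mul_dist d e (by omega) (by omega)
      omega

end IsQuasiPath

lemma dist_getVert_left_le {x y : V} (p : G.Walk x y) (i : ℕ) : G.dist x (p.getVert i) ≤ i :=
  (SimpleGraph.dist_le (p.take i)).trans (by simp [SimpleGraph.Walk.take_length])

lemma dist_getVert_right_le {x y : V} (p : G.Walk x y) (i : ℕ) :
    G.dist (p.getVert i) y ≤ p.length - i :=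
  (SimpleGraph.dist_le (p.drop i)).trans_eq (p.drop_length i)

lemma isQuasiPath_getVert (hG : G.Connected) (hK : 1 ≤ K) (C : ℕ) {x y : V} {p : G.Walk x y}
    (hp : p.length = G.dist x y) : IsQuasiPath G K C p.getVert p.length where
  dist_succ_le i hi := (SimpleGraph.dist_eq_one_iff_adj.2 (p.adj_getVert_succ hi)).le
  le_add_mul_dist i j _ hj := by
    have hx := dist_getVert_left_le p i
    have hy := dist_getVert_right_le p j
    have hxy : G.dist x y ≤ G.dist x (p.getVert i) + G.dist (p.getVert i) y := hG.dist_triangle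
    have hiy : G.dist (p.getVert i) y
        ≤ G.dist (p.getVert i) (p.getVert j) + G.dist (p.getVert j) y := hG.dist_triangle
    have := Nat.le_mul_of_pos_left (G.dist (p.getVert i) (p.getVert j)) hK
    omega

-- This minimizes `F s t + s - t`, in a form that avoids truncated subtraction.
lemma exists_minimal_crossing (F : ℕ → ℕ → ℕ) (J L : ℕ) :
    ∃ s₀ ≤ J, ∃ t₀ ≤ L, ∀ s ≤ J, ∀ t ≤ L, F s₀ t₀ + s₀ + t ≤ F s t + s + t₀ := by
  obtain ⟨⟨s₀, t₀⟩, hmem, hmin⟩ := Finset.exists_min_image (Finset.Iic J ×ˢ Finset.Iic L)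
    (fun p => F p.1 p.2 + p.1 + (L - p.2)) ⟨(0, 0), by simp⟩
  simp only [Finset.mem_product, Finset.mem_Iic, Prod.forall] at hmem hmin
  refine ⟨s₀, hmem.1, t₀, hmem.2, fun s hs t ht => ?_⟩
  have := hmin s t ⟨hs, ht⟩
  omega

lemma IsQuasiPath.concat_geodesic (hG : G.Connected) (hK : 1 ≤ K) {s₀ t₀ : ℕ}
    (ha : IsQuasiPath G K C a s₀) (hb : IsQuasiPath G K C b L)
    (hmin : ∀ s ≤ s₀, ∀ t, t₀ ≤ t → t ≤ L →
      K * G.dist (a s₀) (b t₀) + s₀ + t ≤ K * G.dist (a s) (b t) + s + t₀)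
    (ht₀ : t₀ ≤ L) {p : G.Walk (a s₀) (b t₀)} (hp : p.length = G.dist (a s₀) (b t₀)) :
    IsQuasiPath G K C (concatAt (concatAt a s₀ p.getVert) (s₀ + p.length) fun i => b (t₀ + i))
      (s₀ + p.length + (L - t₀)) := by
  rw [← hp] at hmin
  have hac : p.getVert 0 = a s₀ := p.getVert_zero
  have hcb : b (t₀ + 0) = concatAt a s₀ p.getVert (s₀ + p.length) := by
    rw [concatAt_add, p.getVert_length, add_zero]
  refine (ha.concat (isQuasiPath_getVert hG hK C hp) hac fun s hs i hi => ?_).concat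
    (hb.drop ht₀) hcb fun i hi j hj => ?_
  · have h_min := hmin s hs t₀ le_rfl ht₀
    have h_tri : G.dist (a s) (b t₀) ≤ G.dist (a s) (p.getVert i) + G.dist (p.getVert i) (b t₀) :=
      hG.dist_triangle
    have h_end := dist_getVert_right_le p i
    obtain ⟨e, he⟩ := Nat.exists_eq_add_of_le hi
    have : K * G.dist (a s) (b t₀) ≤ K * (G.dist (a s) (p.getVert i) + e) :=
      Nat.mul_le_mul_left K (by omega)
    rw [he] at h_min
    nlinarith
  · obtain his | his := le_total i s₀
    · rw [concatAt_of_le hac his]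
      have h_min := hmin i his (t₀ + j) (by omega) (by omega)
      have := Nat.le_mul_of_pos_left p.length hK
      omega
    · obtain ⟨d, rfl⟩ := Nat.exists_eq_add_of_le his
      rw [concatAt_add]
      have h_min := hmin s₀ le_rfl (t₀ + j) (by omega) (by omega)
      have h_tri : G.dist (a s₀) (b (t₀ + j))
          ≤ G.dist (a s₀) (p.getVert d) + G.dist (p.getVert d) (b (t₀ + j)) := hG.dist_triangle
      have h_start := dist_getVert_left_le p d
      obtain ⟨e, he⟩ := Nat.exists_eq_add_of_le (show d ≤ p.length by omega)
      have : K * G.dist (a s₀) (b (t₀ + j)) ≤ K * (d + G.dist (p.getVert d) (b (t₀ + j))) :=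
        Nat.mul_le_mul_left K (by omega)
      rw [he] at h_min ⊢
      nlinarith

lemma IsQuasiPath.exists_shortcut (hG : G.Connected) (hK : 1 ≤ K) (ha : IsQuasiPath G K C a J)
    (hb : IsQuasiPath G K C b L) (hab : b 0 = a J)
    (hfar : ∀ s < m, ∀ t ≤ L, J + L < K * G.dist (a s) (b t)) :
    ∃ w T, IsQuasiPath G K C w T ∧ (∀ i ≤ m, w i = a i) ∧ m ≤ T ∧ w T = b L := by
  obtain ⟨s₀, hs₀, t₀, ht₀, hmin⟩ :=
    exists_minimal_crossing (fun s t => K * G.dist (a s) (b t)) J L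
  obtain ⟨p, hp⟩ := hG.exists_walk_length_eq_dist (a s₀) (b t₀)
  have hms : m ≤ s₀ := by
    by_contra! hlt
    have h_far := hfar s₀ hlt t₀ ht₀
    have h_min := hmin J le_rfl 0 (Nat.zero_le L)
    rw [hab, SimpleGraph.dist_self] at h_min
    omega
  refine ⟨_, _, (ha.take hs₀).concat_geodesic hG hK hb
    (fun s hs t _ ht => hmin s (hs.trans hs₀) t ht) ht₀ hp, fun i hi => ?_, by omega, ?_⟩
  · rw [concatAt_of_le (by rw [concatAt_add, p.getVert_length, add_zero]) (by omega),
      concatAt_of_le p.getVert_zero (hi.trans hms)]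
  · rw [concatAt_add, Nat.add_sub_cancel' ht₀]

end QuasiPath

section QuasiGeodesic

variable {Z : Type*} [MetricSpace Z] {q Q q' Q' D : ℝ} {g w : ℕ → Z} {s : Set ℕ}

namespace IsQGOn

lemma mono_s14 (h : IsQGOn q Q g s) (hq : 0 < q) (hqq' : q ≤ q') (hQQ' : Q ≤ Q') :
    IsQGOn q' Q' g s := by
  intro x hx y hy
  obtain ⟨hlow, hup⟩ := h x hx y hy
  constructor
  · calc |(x : ℝ) - y| / q' - Q' ≤ |(x : ℝ) - y| / q - Q := by gcongr
      _ ≤ dist (g x) (g y) := hlow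
  · calc dist (g x) (g y) ≤ q * |(x : ℝ) - y| + Q := hup
      _ ≤ q' * |(x : ℝ) - y| + Q' := by gcongr

lemma eventually_atTop (h : IsQGOn q Q g s) (hq : 0 < q) : ∀ᶠ k in atTop, IsQGOn k k g s := by
  filter_upwards [eventually_ge_atTop q, eventually_ge_atTop Q] with k hqk hQk
  exact h.mono_s14 hq hqk hQk

lemma sub_le_mul_dist_add (h : IsQGOn q Q g s) (hq : 0 < q) {i j : ℕ} (hi : i ∈ s) (hj : j ∈ s) :
    (j : ℝ) - i ≤ q * (dist (g i) (g j) + Q) := by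
  have hlow : |(i : ℝ) - j| / q ≤ dist (g i) (g j) + Q := by linarith [(h i hi j hj).1]
  rw [div_le_iff₀' hq] at hlow
  linarith [neg_abs_le ((i : ℝ) - j)]

lemma dist_succ_le (h : IsQGOn q Q g s) {i : ℕ} (hi : i ∈ s) (hi' : i + 1 ∈ s) :
    dist (g i) (g (i + 1)) ≤ q + Q := by
  simpa using (h i hi _ hi').2

end IsQGOn

lemma isQGOn_Icc_of_dist_succ_le {m n : ℕ} (hq : 0 < q) (hQ : 0 ≤ Q)
    (hstep : ∀ i, m ≤ i → i < n → dist (w i) (w (i + 1)) ≤ q)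
    (hlow : ∀ i j, m ≤ i → i ≤ j → j ≤ n → (j : ℝ) - i ≤ q * (dist (w i) (w j) + Q)) :
    IsQGOn q Q w (Set.Icc m n) := by
  have hup : ∀ i j, m ≤ i → i ≤ j → j ≤ n → dist (w i) (w j) ≤ q * ((j : ℝ) - i) := by
    intro i j hi hij hj
    calc dist (w i) (w j) ≤ ∑ _l ∈ Finset.Ico i j, q :=
          dist_le_Ico_sum_of_dist_le hij fun hil hlj => hstep _ (hi.trans hil) (hlj.trans_le hj)
      _ = q * ((j : ℝ) - i) := by simp [Nat.cast_sub hij, mul_comm]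
  intro i hi j hj
  wlog hij : i ≤ j generalizing i j
  · simpa only [abs_sub_comm, dist_comm] using this j hj i hi (le_of_not_ge hij)
  rw [abs_sub_comm, abs_of_nonneg (by simpa using hij), sub_le_iff_le_add, div_le_iff₀' hq]
  exact ⟨hlow i j hi.1 hij hj.2, (hup i j hi.1 hij hj.2).trans (le_add_of_nonneg_right hQ)⟩

lemma IsQGRay.exists_linear_growth (hg : IsQGRay q Q g) (hq : 0 < q) (o : Z) :
    ∃ A : ℝ, 1 ≤ A ∧ ∀ i : ℕ, 1 ≤ i →
      (i : ℝ) ≤ A * (dist (g i) o + 1) ∧ dist (g i) o ≤ A * (i + 1) := by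
  set r := dist (g 1) o
  refine ⟨max (max 1 q) (max (q * (r + Q) + 1) (Q + r)), by simp, fun i hi => ?_⟩
  set A := max (max 1 q) (max (q * (r + Q) + 1) (Q + r))
  have hqA : q ≤ A := by simp [A]
  have hlowA : q * (r + Q) + 1 ≤ A := by simp [A]
  have hupA : Q + r ≤ A := by simp [A]
  have hi' : (1 : ℝ) ≤ i := by exact_mod_cast hi
  constructor
  · have hindex := IsQGOn.sub_le_mul_dist_add hg hq (le_refl 1) hi
    rw [Nat.cast_one] at hindex
    calc (i : ℝ) ≤ q * (dist (g 1) (g i) + Q) + 1 := by linarith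
      _ ≤ q * (r + dist (g i) o + Q) + 1 := by gcongr; exact dist_triangle_right _ _ _
      _ = q * dist (g i) o + (q * (r + Q) + 1) := by ring
      _ ≤ A * dist (g i) o + A := by gcongr
      _ = A * (dist (g i) o + 1) := by ring
  · have hdist := (hg i hi 1 (le_refl 1)).2
    rw [Nat.cast_one, abs_of_nonneg (by linarith)] at hdist
    calc dist (g i) o ≤ dist (g i) (g 1) + r := dist_triangle _ _ _
      _ ≤ q * i + (Q + r) := by linarith
      _ ≤ A * i + A := by gcongr
      _ = A * (i + 1) := by ring

lemma IntegrallyQGWith.eventually_atTop (hZ : IntegrallyQGWith Z q Q) (hq : 0 < q) :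
    ∀ᶠ k in atTop, IntegrallyQGWith Z k k := by
  filter_upwards [eventually_ge_atTop q, eventually_ge_atTop Q] with k hqk hQk x y
  obtain ⟨u, n, hn, hu, hux, huy⟩ := hZ x y
  exact ⟨u, n, hn, hu.mono_s14 hq hqk hQk, hux, huy⟩

lemma IntegrallyQGWith.exists_dist_mem_Icc (hZ : IntegrallyQGWith Z q Q)
    (hunb : ¬ Bornology.IsBounded (Set.univ : Set Z)) (o : Z) {r : ℝ} (hr : 0 < r) :
    ∃ x, dist x o ∈ Set.Icc r (r + (q + Q)) := by
  classical
  obtain ⟨x, hx⟩ : ∃ x, r ≤ dist x o := by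
    by_contra! hlt
    exact hunb ((Metric.isBounded_iff_subset_closedBall o).2 ⟨r, fun x _ => (hlt x).le⟩)
  obtain ⟨u, n, hn, hu, hu_one, hu_n⟩ := hZ o x
  have hex : ∃ i, r ≤ dist (u (i + 1)) o := ⟨n - 1, by rwa [Nat.sub_add_cancel hn, hu_n]⟩
  have hfind_le : Nat.find hex ≤ n - 1 := Nat.find_le (by rwa [Nat.sub_add_cancel hn, hu_n])
  refine ⟨u (Nat.find hex + 1), Nat.find_spec hex, ?_⟩
  obtain ⟨j, hj⟩ : ∃ j, Nat.find hex = j + 1 := by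
    refine Nat.exists_eq_succ_of_ne_zero fun hzero => hr.not_ge ?_
    simpa [hzero, hu_one] using Nat.find_spec hex
  have hbefore : dist (u (j + 1)) o < r := not_le.1 (Nat.find_min hex (by omega))
  have hstep : dist (u (j + 1)) (u (j + 1 + 1)) ≤ q + Q :=
    hu.dist_succ_le ⟨by omega, by omega⟩ ⟨by omega, by omega⟩
  rw [hj]
  linarith [dist_triangle_left (u (j + 1 + 1)) o (u (j + 1))]

/-- The graph on the points of `Z` joining distinct points at distance at most `D` (the 1-skeleton
of the Vietoris–Rips complex). Its distance is quasi-isometric to that of an integrally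
quasi-geodesic `Z` when `D = q + Q`, and it has geodesics. -/
def ripsGraph (Z : Type*) [MetricSpace Z] (D : ℝ) : SimpleGraph Z where
  Adj x y := x ≠ y ∧ dist x y ≤ D
  symm := ⟨fun x y h => ⟨h.1.symm, dist_comm x y ▸ h.2⟩⟩
  loopless := ⟨fun _ h => h.1 rfl⟩

lemma exists_ripsGraph_walk_of_dist_le {x y : Z} (h : dist x y ≤ D) :
    ∃ p : (ripsGraph Z D).Walk x y, p.length ≤ 1 := by
  obtain rfl | hxy := eq_or_ne x y
  · exact ⟨.nil, zero_le_one⟩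
  · exact ⟨SimpleGraph.Adj.toWalk ⟨hxy, h⟩, le_rfl⟩

lemma exists_ripsGraph_walk_of_chain {n : ℕ} (h : ∀ i < n, dist (w i) (w (i + 1)) ≤ D) :
    ∃ p : (ripsGraph Z D).Walk (w 0) (w n), p.length ≤ n := by
  induction n with
  | zero => exact ⟨.nil, le_rfl⟩
  | succ n ih =>
    obtain ⟨p, hp⟩ := ih fun i hi => h i (by omega)
    obtain ⟨e, he⟩ := exists_ripsGraph_walk_of_dist_le (h n n.lt_succ_self)
    exact ⟨p.append e, by rw [SimpleGraph.Walk.length_append]; omega⟩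

lemma dist_le_mul_length_ripsGraph {x y : Z} (p : (ripsGraph Z D).Walk x y) :
    dist x y ≤ D * p.length := by
  induction p with
  | nil => simp
  | @cons x v y hadj p ih =>
    rw [SimpleGraph.Walk.length_cons, Nat.cast_add_one]
    linarith [dist_triangle x v y, hadj.2]

lemma dist_le_mul_dist_ripsGraph (hconn : (ripsGraph Z D).Connected) (x y : Z) :
    dist x y ≤ D * (ripsGraph Z D).dist x y := by
  obtain ⟨p, hp⟩ := hconn.exists_walk_length_eq_dist x y
  exact hp ▸ dist_le_mul_length_ripsGraph p

namespace IntegrallyQGWith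

lemma exists_ripsGraph_walk (hZ : IntegrallyQGWith Z q Q) (hq : 0 < q) (x y : Z) :
    ∃ p : (ripsGraph Z (q + Q)).Walk x y, (p.length : ℝ) ≤ q * (dist x y + Q) := by
  obtain ⟨u, n, hn, hu, rfl, rfl⟩ := hZ x y
  obtain ⟨n, rfl⟩ := Nat.exists_eq_add_of_le' hn
  obtain ⟨p, hp⟩ := exists_ripsGraph_walk_of_chain (w := fun i => u (i + 1)) (n := n)
    fun i hi => hu.dist_succ_le ⟨by omega, by omega⟩ ⟨by omega, by omega⟩
  have hindex := hu.sub_le_mul_dist_add hq ⟨le_rfl, hn⟩ ⟨hn, le_rfl⟩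
  have hp' : (p.length : ℝ) ≤ n := by exact_mod_cast hp
  push_cast at hindex
  exact ⟨p, by linarith⟩

lemma ripsGraph_connected [Nonempty Z] (hZ : IntegrallyQGWith Z q Q) (hq : 0 < q) :
    (ripsGraph Z (q + Q)).Connected where
  preconnected x y := (hZ.exists_ripsGraph_walk hq x y).choose.reachable

lemma ripsGraph_dist_le (hZ : IntegrallyQGWith Z q Q) (hq : 0 < q) (x y : Z) :
    ((ripsGraph Z (q + Q)).dist x y : ℝ) ≤ q * (dist x y + Q) := by
  obtain ⟨p, hp⟩ := hZ.exists_ripsGraph_walk hq x y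
  exact (Nat.cast_le.2 (SimpleGraph.dist_le p)).trans hp

end IntegrallyQGWith

lemma IsQGOn.isQuasiPath {K C n : ℕ} (hg : IsQGOn q Q g (Set.Icc 1 (n + 1))) (hq : 0 < q)
    (hconn : (ripsGraph Z (q + Q)).Connected) (hK : q * (q + Q) ≤ K) (hC : q * Q ≤ C) :
    IsQuasiPath (ripsGraph Z (q + Q)) K C (fun i => g (i + 1)) n where
  dist_succ_le i hi := by
    obtain ⟨p, hp⟩ := exists_ripsGraph_walk_of_dist_le
      (hg.dist_succ_le (i := i + 1) ⟨by omega, by omega⟩ ⟨by omega, by omega⟩)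
    exact (SimpleGraph.dist_le p).trans hp
  le_add_mul_dist i j hij hj := by
    have hindex := hg.sub_le_mul_dist_add hq (i := i + 1) (j := j + 1)
      ⟨by omega, by omega⟩ ⟨by omega, by omega⟩
    set N := (ripsGraph Z (q + Q)).dist (g (i + 1)) (g (j + 1))
    have hdist : dist (g (i + 1)) (g (j + 1)) ≤ (q + Q) * N := dist_le_mul_dist_ripsGraph hconn _ _
    have hreal : (j : ℝ) - i ≤ K * N + C := by
      calc (j : ℝ) - i = ((j + 1 : ℕ) : ℝ) - ((i + 1 : ℕ) : ℝ) := by push_cast; ring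
        _ ≤ q * ((q + Q) * N + Q) := hindex.trans (by gcongr)
        _ = q * (q + Q) * N + q * Q := by ring
        _ ≤ K * N + C := by gcongr
    exact_mod_cast (show (j : ℝ) ≤ i + K * N + C by linarith)

lemma IsQuasiPath.isQGOn {K C T : ℕ} {k : ℝ} (hZ : IntegrallyQGWith Z q Q) (hq : 0 < q)
    (hconn : (ripsGraph Z (q + Q)).Connected) (hw : IsQuasiPath (ripsGraph Z (q + Q)) K C w T)
    (hk : 1 ≤ k) (hstep : q + Q ≤ k) (hmul : K * q ≤ k) (hadd : K * (q * Q) + C ≤ k) :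
    IsQGOn k k (fun i => w (i - 1)) (Set.Icc 1 (T + 1)) := by
  refine isQGOn_Icc_of_dist_succ_le (by linarith) (by linarith) (fun i hi hiT => ?_)
    fun i j hi hij hj => ?_
  · obtain ⟨i, rfl⟩ := Nat.exists_eq_add_of_le' hi
    have hone : ((ripsGraph Z (q + Q)).dist (w i) (w (i + 1)) : ℝ) ≤ 1 := by
      exact_mod_cast hw.dist_succ_le i (by omega)
    have hdist := dist_le_mul_dist_ripsGraph hconn (w i) (w (i + 1))
    simp only [Nat.add_sub_cancel]
    nlinarith [Nat.cast_nonneg (α := ℝ) ((ripsGraph Z (q + Q)).dist (w i) (w (i + 1)))]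
  · obtain ⟨i, rfl⟩ := Nat.exists_eq_add_of_le' hi
    obtain ⟨j, rfl⟩ := Nat.exists_eq_add_of_le' (hi.trans hij)
    have hindex : (j : ℝ) ≤ i + K * (ripsGraph Z (q + Q)).dist (w i) (w j) + C := by
      exact_mod_cast hw.le_add_mul_dist i j (by omega) (by omega)
    simp only [Nat.add_sub_cancel]
    calc ((j + 1 : ℕ) : ℝ) - ((i + 1 : ℕ) : ℝ)
        ≤ K * (ripsGraph Z (q + Q)).dist (w i) (w j) + C := by push_cast; linarith
      _ ≤ K * (q * (dist (w i) (w j) + Q)) + C := by gcongr; exact hZ.ripsGraph_dist_le hq _ _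
      _ = K * q * dist (w i) (w j) + (K * (q * Q) + C) := by ring
      _ ≤ k * dist (w i) (w j) + k * k := by
        gcongr
        exact hadd.trans (le_mul_of_one_le_left (by linarith) hk)
      _ = k * (dist (w i) (w j) + k) := by ring

lemma IntegrallyQGWith.eventually_mem_cone_of_detour (hZ : IntegrallyQGWith Z q Q) (hq : 0 < q)
    {M : ℝ} (hM : 0 ≤ M) :
    ∀ᶠ k : ℝ in atTop, ∀ (g σ : ℕ → Z) (J L m : ℕ) (δ : ℝ), IsQGRay q Q g →
      IsQGOn q Q σ (Set.Icc 1 (L + 1)) → σ 1 = g (J + 1) →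
      (∀ s ∈ Set.Icc 1 m, ∀ t ∈ Set.Icc 1 (L + 1), δ ≤ dist (g s) (σ t)) →
      (J : ℝ) + L < M * δ → σ (L + 1) ∈ Cone (g 1) k k g m := by
  obtain ⟨K, hK⟩ := exists_nat_ge (max 1 (max (q * (q + Q)) (M * (q + Q))))
  obtain ⟨C, hC⟩ := exists_nat_ge (q * Q)
  simp only [max_le_iff, Nat.one_le_cast] at hK
  obtain ⟨hK_one, hK_index, hK_far⟩ := hK
  filter_upwards [eventually_ge_atTop 1, eventually_ge_atTop (q + Q), eventually_ge_atTop (K * q),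
    eventually_ge_atTop (K * (q * Q) + C)] with k hk hstep hmul hadd
  intro g σ J L m δ hg hσ hσg hfar hJL
  have : Nonempty Z := ⟨g 1⟩
  have hconn := hZ.ripsGraph_connected hq
  have hg_path : IsQuasiPath (ripsGraph Z (q + Q)) K C (fun i => g (i + 1)) J :=
    IsQGOn.isQuasiPath (fun x hx y hy => hg x hx.1 y hy.1) hq hconn hK_index hC
  have hfar_graph : ∀ s < m, ∀ t ≤ L,
      J + L < K * (ripsGraph Z (q + Q)).dist (g (s + 1)) (σ (t + 1)) := by
    intro s hs t ht
    set N := (ripsGraph Z (q + Q)).dist (g (s + 1)) (σ (t + 1))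
    have hδ : δ ≤ (q + Q) * N := (hfar (s + 1) ⟨by omega, hs⟩ (t + 1) ⟨by omega, by omega⟩).trans
      (dist_le_mul_dist_ripsGraph hconn _ _)
    have hreal : (J : ℝ) + L < K * N := by
      calc (J : ℝ) + L < M * δ := hJL
        _ ≤ M * ((q + Q) * N) := by gcongr
        _ = M * (q + Q) * N := by ring
        _ ≤ K * N := by gcongr
    exact_mod_cast hreal
  obtain ⟨w, T, hw, hwg, hmT, hwσ⟩ := hg_path.exists_shortcut hconn hK_one
    (hσ.isQuasiPath hq hconn hK_index hC) hσg hfar_graph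
  refine ⟨fun i => w (i - 1), T + 1, T + 1, hw.isQGOn hZ hq hconn hk hstep hmul hadd,
    hwg 0 (Nat.zero_le m), fun j hj hjm => ?_, by omega, le_rfl, hwσ⟩
  simp only [hwg (j - 1) (by omega), Nat.sub_add_cancel hj]

end QuasiGeodesic

section Product

variable {X Y : Type*} [MetricSpace X] [MetricSpace Y] {q Q : ℝ} {g h : ℕ → WithLp 1 (X × Y)}

lemma withLp_one_prod_dist_eq (p z : WithLp 1 (X × Y)) :
    dist p z = dist p.fst z.fst + dist p.snd z.snd := by
  rw [WithLp.prod_dist_eq_add (by simp)]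
  simp

namespace IsQGOn

lemma toLp_staircase {α : ℕ → X} {β : ℕ → Y} {μ ν : ℕ → ℕ} {s t r : Set ℕ}
    (hα : IsQGOn q Q α s) (hβ : IsQGOn q Q β t) (hμ : Monotone μ) (hν : Monotone ν) {c : ℕ}
    (hμν : ∀ i, μ i + ν i = i + c) (hμs : Set.MapsTo μ r s) (hνt : Set.MapsTo ν r t) :
    IsQGOn q (2 * Q) (fun i => WithLp.toLp 1 (α (μ i), β (ν i))) r := by
  intro i hi j hj
  wlog hij : i ≤ j generalizing i j
  · simpa only [abs_sub_comm, dist_comm] using this j hj i hi (le_of_not_ge hij)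
  have hsplit : |(i : ℝ) - j| = |(μ i : ℝ) - μ j| + |(ν i : ℝ) - ν j| := by
    have hi' : (μ i : ℝ) + ν i = i + c := by exact_mod_cast hμν i
    have hj' : (μ j : ℝ) + ν j = j + c := by exact_mod_cast hμν j
    have hμij : (μ i : ℝ) ≤ μ j := by exact_mod_cast hμ hij
    have hνij : (ν i : ℝ) ≤ ν j := by exact_mod_cast hν hij
    rw [abs_of_nonpos (by linarith), abs_of_nonpos (by linarith), abs_of_nonpos (by linarith)]
    linarith
  obtain ⟨hα_low, hα_up⟩ := hα _ (hμs hi) _ (hμs hj)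
  obtain ⟨hβ_low, hβ_up⟩ := hβ _ (hνt hi) _ (hνt hj)
  simp only [withLp_one_prod_dist_eq, WithLp.toLp_fst, WithLp.toLp_snd, hsplit, add_div, mul_add]
  exact ⟨by linarith, by linarith⟩

lemma toLp_swap {σ : ℕ → WithLp 1 (X × Y)} {s : Set ℕ} (hσ : IsQGOn q Q σ s) :
    IsQGOn q Q (fun i => WithLp.toLp 1 ((σ i).snd, (σ i).fst)) s := by
  intro i hi j hj
  simp only [withLp_one_prod_dist_eq, WithLp.toLp_fst, WithLp.toLp_snd,
    add_comm (dist (σ i).snd (σ j).snd)]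
  simpa only [withLp_one_prod_dist_eq] using hσ i hi j hj

end IsQGOn

lemma exists_isQGOn_snd_then_fst (hX : IntegrallyQGWith X q Q) (hY : IntegrallyQGWith Y q Q)
    (p z : WithLp 1 (X × Y)) :
    ∃ (σ : ℕ → WithLp 1 (X × Y)) (L : ℕ), IsQGOn q (2 * Q) σ (Set.Icc 1 (L + 1)) ∧ σ 1 = p ∧
      σ (L + 1) = z ∧ ∀ t, (σ t).fst = p.fst ∨ (σ t).snd = z.snd := by
  obtain ⟨α, a, ha, hα, hαp, hαz⟩ := hX p.fst z.fst
  obtain ⟨β, b, hb, hβ, hβp, hβz⟩ := hY p.snd z.snd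
  obtain ⟨a, rfl⟩ := Nat.exists_eq_add_of_le' ha
  obtain ⟨b, rfl⟩ := Nat.exists_eq_add_of_le' hb
  refine ⟨fun t => WithLp.toLp 1 (α (t - (b + 1) + 1), β (min t (b + 1))), a + b,
    hα.toLp_staircase hβ (μ := fun t => t - (b + 1) + 1) (ν := fun t => min t (b + 1)) (c := 1)
      (fun i j hij => by dsimp only; omega) (fun i j hij => by dsimp only; omega)
      (fun i => by omega) ?_ ?_, ?_, ?_, fun t => ?_⟩
  · rintro t ⟨-, ht⟩
    exact ⟨Nat.le_add_left 1 _, by dsimp only; omega⟩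
  · rintro t ⟨ht, -⟩
    exact ⟨le_min ht hb, min_le_right t _⟩
  · simp only [Nat.sub_eq_zero_of_le hb, Nat.min_eq_left hb, zero_add, hαp, hβp]
    rfl
  · simp only [show a + b + 1 - (b + 1) + 1 = a + 1 by omega,
      show min (a + b + 1) (b + 1) = b + 1 by omega, hαz, hβz]
    rfl
  · obtain htb | htb := le_total t (b + 1)
    · left
      simp only [Nat.sub_eq_zero_of_le htb, zero_add, hαp, WithLp.toLp_fst]
    · right
      simp only [Nat.min_eq_right htb, hβz, WithLp.toLp_snd]

lemma exists_isQGOn_fst_then_snd (hX : IntegrallyQGWith X q Q) (hY : IntegrallyQGWith Y q Q)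
    (p z : WithLp 1 (X × Y)) :
    ∃ (σ : ℕ → WithLp 1 (X × Y)) (L : ℕ), IsQGOn q (2 * Q) σ (Set.Icc 1 (L + 1)) ∧ σ 1 = p ∧
      σ (L + 1) = z ∧ ∀ t, (σ t).snd = p.snd ∨ (σ t).fst = z.fst := by
  obtain ⟨τ, L, hτ, hτp, hτz, hcorner⟩ := exists_isQGOn_snd_then_fst hY hX
    (WithLp.toLp 1 (p.snd, p.fst)) (WithLp.toLp 1 (z.snd, z.fst))
  exact ⟨_, L, hτ.toLp_swap, by rw [hτp]; rfl, by rw [hτz]; rfl, hcorner⟩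

lemma IntegrallyQGWith.withLp_prod (hX : IntegrallyQGWith X q Q) (hY : IntegrallyQGWith Y q Q) :
    IntegrallyQGWith (WithLp 1 (X × Y)) q (2 * Q) := fun p z =>
  let ⟨σ, L, hσ, hσp, hσz, _⟩ := exists_isQGOn_snd_then_fst hX hY p z
  ⟨σ, L + 1, Nat.le_add_left 1 L, hσ, hσp, hσz⟩

lemma exists_isQGOn_avoiding_ball (hX : IntegrallyQGWith X q Q) (hY : IntegrallyQGWith Y q Q)
    {o p z : WithLp 1 (X × Y)} {R : ℝ} (hp : 2 * R ≤ dist p o) (hz_fst : R ≤ dist z.fst o.fst)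
    (hz_snd : R ≤ dist z.snd o.snd) :
    ∃ (σ : ℕ → WithLp 1 (X × Y)) (L : ℕ), IsQGOn q (2 * Q) σ (Set.Icc 1 (L + 1)) ∧ σ 1 = p ∧
      σ (L + 1) = z ∧ ∀ t, R ≤ dist (σ t) o := by
  have dist_fst_le (x : WithLp 1 (X × Y)) : dist x.fst o.fst ≤ dist x o := by
    rw [withLp_one_prod_dist_eq]
    exact le_add_of_nonneg_right dist_nonneg
  have dist_snd_le (x : WithLp 1 (X × Y)) : dist x.snd o.snd ≤ dist x o := by
    rw [withLp_one_prod_dist_eq]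
    exact le_add_of_nonneg_left dist_nonneg
  rw [withLp_one_prod_dist_eq] at hp
  obtain hp_fst | hp_snd : R ≤ dist p.fst o.fst ∨ R ≤ dist p.snd o.snd := by
    by_contra! hlt
    linarith
  · obtain ⟨σ, L, hσ, hσp, hσz, hcorner⟩ := exists_isQGOn_snd_then_fst hX hY p z
    exact ⟨σ, L, hσ, hσp, hσz, fun t => (hcorner t).elim
      (fun h => (h ▸ hp_fst).trans (dist_fst_le _)) fun h => (h ▸ hz_snd).trans (dist_snd_le _)⟩
  · obtain ⟨σ, L, hσ, hσp, hσz, hcorner⟩ := exists_isQGOn_fst_then_snd hX hY p z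
    exact ⟨σ, L, hσ, hσp, hσz, fun t => (hcorner t).elim
      (fun h => (h ▸ hp_snd).trans (dist_snd_le _)) fun h => (h ▸ hz_fst).trans (dist_fst_le _)⟩

lemma exists_detour_of_linear_growth (hX : IntegrallyQGWith X q Q) (hY : IntegrallyQGWith Y q Q)
    (hq : 0 < q) (hQ : 0 ≤ Q) {o : WithLp 1 (X × Y)} {A B : ℝ} (hA : 1 ≤ A)
    (hgrowth : ∀ i : ℕ, 1 ≤ i →
      (i : ℝ) ≤ A * (dist (g i) o + 1) ∧ dist (g i) o ≤ A * (i + 1))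
    {R : ℝ} (hR : 1 ≤ R) {z : WithLp 1 (X × Y)} (hz_fst : R ≤ dist z.fst o.fst)
    (hz_snd : R ≤ dist z.snd o.snd) (hz : dist z o ≤ B * R) :
    ∃ (σ : ℕ → WithLp 1 (X × Y)) (J L : ℕ), IsQGOn q (2 * Q) σ (Set.Icc 1 (L + 1)) ∧
      σ 1 = g (J + 1) ∧ σ (L + 1) = z ∧ (∀ t, R ≤ dist (σ t) o) ∧
      (J : ℝ) + L ≤ (3 * A + q * (A * (3 * A + 2) + B + 2 * Q)) * R := by
  set J := ⌊A * (2 * R + 1)⌋₊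
  obtain ⟨hindex, hdist⟩ := hgrowth (J + 1) (Nat.le_add_left 1 J)
  push_cast at hindex hdist
  have hJ : (J : ℝ) ≤ 3 * A * R := (Nat.floor_le (by positivity)).trans (by nlinarith)
  have hgJ_ge : 2 * R ≤ dist (g (J + 1)) o := by
    have := (Nat.lt_floor_add_one (A * (2 * R + 1))).trans_le hindex
    linarith [lt_of_mul_lt_mul_left this (by linarith)]
  have hgJ_le : dist (g (J + 1)) o ≤ A * (3 * A + 2) * R := by
    calc dist (g (J + 1)) o ≤ A * (J + 1 + 1) := hdist
      _ ≤ A * (3 * A * R + 2 * R) := mul_le_mul_of_nonneg_left (by linarith) (by linarith)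
      _ = A * (3 * A + 2) * R := by ring
  obtain ⟨σ, L, hσ, hσg, hσz, havoid⟩ := exists_isQGOn_avoiding_ball hX hY hgJ_ge hz_fst hz_snd
  have hL : (L : ℝ) ≤ q * (dist (g (J + 1)) z + 2 * Q) := by
    have := hσ.sub_le_mul_dist_add hq (i := 1) (j := L + 1) (by simp) (by simp)
    rw [hσg, hσz] at this
    simpa using this
  refine ⟨σ, J, L, hσ, hσg, hσz, havoid, ?_⟩
  calc (J : ℝ) + L ≤ 3 * A * R + q * (dist (g (J + 1)) o + dist z o + 2 * Q) := by
        grw [hJ, hL, dist_triangle_right (g (J + 1)) z o]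
    _ ≤ 3 * A * R + q * (A * (3 * A + 2) * R + B * R + 2 * Q * R) := by
        have := le_mul_of_one_le_right (mul_nonneg zero_le_two hQ) hR
        gcongr
    _ = (3 * A + q * (A * (3 * A + 2) + B + 2 * Q)) * R := by ring

lemma IsQGRay.eventually_mem_cone (hX : IntegrallyQGWith X q Q) (hY : IntegrallyQGWith Y q Q)
    (hq : 0 < q) (hQ : 0 ≤ Q) (hg : IsQGRay q Q g) (o : WithLp 1 (X × Y)) {B : ℝ} (hB : 0 ≤ B) :
    ∀ᶠ k : ℝ in atTop, ∀ (m : ℕ) (R : ℝ) (z : WithLp 1 (X × Y)), k * (m + 1) ≤ R →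
      R ≤ dist z.fst o.fst → R ≤ dist z.snd o.snd → dist z o ≤ B * R →
      z ∈ Cone (g 1) k k g m := by
  obtain ⟨A, hA, hgrowth⟩ := hg.exists_linear_growth hq o
  set N := 3 * A + q * (A * (3 * A + 2) + B + 2 * Q)
  have hN : 0 ≤ N := by positivity
  filter_upwards [eventually_ge_atTop (2 * A), (hX.withLp_prod hY).eventually_mem_cone_of_detour hq
    (M := 2 * N + 1) (by linarith)] with k hk hcone m R z hR hz_fst hz_snd hz
  have hAR : 2 * A * (m + 1) ≤ R := (mul_le_mul_of_nonneg_right hk (by positivity)).trans hR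
  have hR_one : 1 ≤ R := by nlinarith [Nat.cast_nonneg (α := ℝ) m]
  obtain ⟨σ, J, L, hσ, hσg, rfl, havoid, hJL⟩ :=
    exists_detour_of_linear_growth hX hY hq hQ hA hgrowth hR_one hz_fst hz_snd hz
  refine hcone g σ J L m (R / 2) (IsQGOn.mono_s14 hg hq le_rfl (by linarith)) hσ hσg
    (fun s hs t _ => ?_) (hJL.trans_lt (by linarith))
  have hgs : dist (g s) o ≤ R / 2 := by
    have hsm : (s : ℝ) ≤ m := by exact_mod_cast hs.2
    calc dist (g s) o ≤ A * (s + 1) := (hgrowth s hs.1).2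
      _ ≤ A * (m + 1) := by gcongr
      _ ≤ R / 2 := by linarith
  linarith [havoid t, dist_triangle_left (σ t) o (g s)]

lemma eventually_cone_inter_nonempty (hX : IntegrallyQGWith X q Q) (hY : IntegrallyQGWith Y q Q)
    (hq : 0 < q) (hQ : 0 ≤ Q) (hX_unb : ¬ Bornology.IsBounded (Set.univ : Set X))
    (hY_unb : ¬ Bornology.IsBounded (Set.univ : Set Y)) (hg : IsQGRay q Q g)
    (hh : IsQGRay q Q h) :
    ∀ᶠ k : ℝ in atTop, ∀ m, (Cone (g 1) k k g m ∩ Cone (h 1) k k h m).Nonempty := by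
  have hB : 0 ≤ 2 + 2 * (q + Q) := by positivity
  filter_upwards [eventually_ge_atTop 1, hg.eventually_mem_cone hX hY hq hQ (g 1) hB,
    hh.eventually_mem_cone hX hY hq hQ (g 1) hB] with k hk hg_cone hh_cone m
  have hR : 1 ≤ k * ((m : ℝ) + 1) := one_le_mul_of_one_le_of_one_le hk (by simp)
  obtain ⟨x, hx_ge, hx_le⟩ := hX.exists_dist_mem_Icc hX_unb (g 1).fst (zero_lt_one.trans_le hR)
  obtain ⟨y, hy_ge, hy_le⟩ := hY.exists_dist_mem_Icc hY_unb (g 1).snd (zero_lt_one.trans_le hR)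
  have hz : dist (WithLp.toLp 1 (x, y)) (g 1) ≤ (2 + 2 * (q + Q)) * (k * (m + 1)) := by
    rw [withLp_one_prod_dist_eq]
    have := le_mul_of_one_le_right (add_nonneg hq.le hQ) hR
    calc dist x (g 1).fst + dist y (g 1).snd ≤ 2 * (k * (m + 1)) + 2 * (q + Q) := by linarith
      _ ≤ (2 + 2 * (q + Q)) * (k * (m + 1)) := by linarith
  exact ⟨WithLp.toLp 1 (x, y), hg_cone m _ _ le_rfl hx_ge hy_ge hz,
    hh_cone m _ _ le_rfl hx_ge hy_ge hz⟩

end Product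

section Limits

variable {Z : Type*} [MetricSpace Z] {q Q k : ℝ} {g h : ℕ → Z}

lemma cone_antitone (x₀ : Z) (q Q : ℝ) (g : ℕ → Z) : Antitone (Cone x₀ q Q g) := by
  rintro m m' hm z ⟨u, n, i, hu, hu_one, hug, hmi, hin, hz⟩
  exact ⟨u, n, i, hu, hu_one, fun j hj hjm => hug j hj (hjm.trans hm), hm.trans hmi, hin, hz⟩

lemma IsQGRay.mem_cone (hg : IsQGRay q Q g) {m i : ℕ} (hmi : m ≤ i) :
    g i ∈ Cone (g 1) q Q g m :=
  ⟨g, i, i, fun x hx y hy => hg x hx.1 y hy.1, rfl, fun _ _ _ => rfl, hmi, le_rfl, rfl⟩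

lemma GeomSO.eventually_dist_le {E : Type*} [PseudoMetricSpace E] {f : Z → E} (hf : GeomSO f)
    (hk : 1 ≤ k) (hg : IsQGRay k k g) {l : E} (hl : Tendsto (fun i => f (g i)) atTop (nhds l))
    {ε : ℝ} (hε : 0 < ε) :
    ∀ᶠ m in atTop, ∀ z ∈ Cone (g 1) k k g m, dist (f z) l ≤ ε := by
  obtain ⟨hbdd, -, -, hdiam⟩ := hf
  obtain ⟨m₀, -, hm₀⟩ := hdiam ε hε k hk (g 1) g hg rfl
  filter_upwards [eventually_ge_atTop m₀] with m hm z hz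
  refine le_of_tendsto (tendsto_const_nhds.dist hl) ?_
  filter_upwards [eventually_ge_atTop m₀] with i hi
  calc dist (f z) (f (g i)) ≤ Metric.diam (f '' Cone (g 1) k k g m₀) :=
        Metric.dist_le_diam_of_mem (hbdd.subset (Set.image_subset_range f _))
          (Set.mem_image_of_mem f (cone_antitone (g 1) k k g hm hz))
          (Set.mem_image_of_mem f (hg.mem_cone hi))
    _ ≤ ε := hm₀.le

lemma GeomSO.eq_of_cone_inter_nonempty {E : Type*} [MetricSpace E] {f : Z → E} (hf : GeomSO f)
    (hk : 1 ≤ k) (hg : IsQGRay k k g) (hh : IsQGRay k k h)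
    (hinter : ∀ m, (Cone (g 1) k k g m ∩ Cone (h 1) k k h m).Nonempty) {l l' : E}
    (hl : Tendsto (fun i => f (g i)) atTop (nhds l))
    (hl' : Tendsto (fun i => f (h i)) atTop (nhds l')) : l = l' := by
  refine eq_of_forall_dist_le fun ε hε => ?_
  obtain ⟨m, hg_cone, hh_cone⟩ := ((hf.eventually_dist_le hk hg hl (half_pos hε)).and
    (hf.eventually_dist_le hk hh hl' (half_pos hε))).exists
  obtain ⟨z, hzg, hzh⟩ := hinter m
  linarith [hg_cone z hzg, hh_cone z hzh, dist_triangle_left l l' (f z)]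

end Limits

theorem stmt_14_general {X Y E : Type*} [MetricSpace X] [MetricSpace Y] [MetricSpace E]
    (hXub : ¬ Bornology.IsBounded (Set.univ : Set X))
    (hYub : ¬ Bornology.IsBounded (Set.univ : Set Y))
    (hX : ∃ q Q : ℝ, 1 ≤ q ∧ 0 ≤ Q ∧ IntegrallyQGWith X q Q)
    (hY : ∃ q Q : ℝ, 1 ≤ q ∧ 0 ≤ Q ∧ IntegrallyQGWith Y q Q)
    (g h : ℕ → WithLp 1 (X × Y))
    (hg : ∃ q Q : ℝ, 1 ≤ q ∧ 0 ≤ Q ∧ IsQGRay q Q g)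
    (hh : ∃ q Q : ℝ, 1 ≤ q ∧ 0 ≤ Q ∧ IsQGRay q Q h)
    (f : WithLp 1 (X × Y) → E) (hf : GeomSO f) (Lg Lh : E)
    (hLg : Tendsto (fun i => f (g i)) atTop (nhds Lg))
    (hLh : Tendsto (fun i => f (h i)) atTop (nhds Lh)) :
    Lg = Lh := by
  obtain ⟨_, _, hqX, _, hX⟩ := hX
  obtain ⟨_, _, hqY, _, hY⟩ := hY
  obtain ⟨_, _, hqg, _, hg⟩ := hg
  obtain ⟨_, _, hqh, _, hh⟩ := hh
  replace hX := hX.eventually_atTop (zero_lt_one.trans_le hqX)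
  replace hY := hY.eventually_atTop (zero_lt_one.trans_le hqY)
  replace hg := IsQGOn.eventually_atTop hg (zero_lt_one.trans_le hqg)
  replace hh := IsQGOn.eventually_atTop hh (zero_lt_one.trans_le hqh)
  obtain ⟨q, hXq, hYq, hgq, hhq, hq⟩ :=
    (hX.and (hY.and (hg.and (hh.and (eventually_gt_atTop 0))))).exists
  have hinter := eventually_cone_inter_nonempty hXq hYq hq hq.le hXub hYub hgq hhq
  obtain ⟨k, hinter, hgk, hhk, hk⟩ :=
    (hinter.and (hg.and (hh.and (eventually_ge_atTop 1)))).exists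
  exact hf.eq_of_cone_inter_nonempty hk hgk hhk hinter hLg hLh

/-- Proposition 5.1: the ℓ₁-product of proper unbounded integrally quasi-geodesic spaces
has trivial quasi-geodesic boundary. -/
theorem stmt_14 {X Y : Type*} [MetricSpace X] [MetricSpace Y]
    [ProperSpace X] [ProperSpace Y]
    (hXub : ¬ Bornology.IsBounded (Set.univ : Set X))
    (hYub : ¬ Bornology.IsBounded (Set.univ : Set Y))
    (hX : ∃ q Q : ℝ, 1 ≤ q ∧ 0 ≤ Q ∧ IntegrallyQGWith X q Q)
    (hY : ∃ q Q : ℝ, 1 ≤ q ∧ 0 ≤ Q ∧ IntegrallyQGWith Y q Q)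
    (g h : ℕ → WithLp 1 (X × Y))
    (hg : ∃ q Q : ℝ, 1 ≤ q ∧ 0 ≤ Q ∧ IsQGRay q Q g)
    (hh : ∃ q Q : ℝ, 1 ≤ q ∧ 0 ≤ Q ∧ IsQGRay q Q h)
    (f : WithLp 1 (X × Y) → ℂ) (hf : GeomSO f) (Lg Lh : ℂ)
    (hLg : Tendsto (fun i => f (g i)) atTop (nhds Lg))
    (hLh : Tendsto (fun i => f (h i)) atTop (nhds Lh)) :
    Lg = Lh := by
  exact stmt_14_general hXub hYub hX hY g h hg hh f hf Lg Lh hLg hLh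
end
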